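/- Let k be an algebraic closure of 𝔽₂ and K = k(t) the rational function field over k. The group of points of the Weierstrass curve W : y² + t²xy + y = x³ over K is isomorphic, as an abelian group, to ℤ/6ℤ. -/

import Mathlib

/-- An algebraic closure `k` of `𝔽₂`. -/
noncomputable abbrev k : Type := AlgebraicClosure (ZMod 2)

/-- The rational function field `K = k(t)`. -/
noncomputable abbrev K : Type := RatFunc k

/-- The variable `t` of `K = k(t)`. -/
noncomputable def t : K := RatFunc.X

/-- The Weierstrass curve `W : y² + t²xy + y = x³` over `K`. -/
noncomputable def W : WeierstrassCurve.Affine K :=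
  { a₁ := t ^ 2, a₂ := 0, a₃ := 1, a₄ := 0, a₆ := 0 }

/-
The curve `E : y² + 3Xxy + y = x³` over `F(X)`, where `3 ≠ 0` in `F`, has no affine points but those
with `x = 0`: over an algebraic closure of `F`, a point on it is a solution of `q₀q₁q₂ = p³`,
`q₀ + q₁ + q₂ = 3Xp` in coprime polynomials, the `qⱼ` are then cubes `aⱼ³`, and `a` lies on the
Hesse cubic `a₀³ + a₁³ + a₂³ = 3X a₀a₁a₂`. Its flex tangents at the flexes with `a₀ = 0` have
product `(X³ - 1) a₀³`, so they are cubes `eⱼ³` up to a distribution of the factors of `X³ - 1`.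
Comparing degrees modulo three, this distribution can be concentrated on a single tangent by a
translation by three-torsion, and then the tangents at `e` give another point of `E`, with `p` of
smaller degree.

In characteristic two `3X = X`, and the Verschiebung maps `y² + X²xy + y = x³` to `E` with fibres of
order at most two. Its affine points therefore are the five obvious ones, and a commutative group of
order six is cyclic.
-/

open Polynomial Function

section Divisibility

variable {R : Type*} [CommRing R]

theorem isCoprime_of_dvd_pow_of_forall_isUnit [IsBezout R] {u v p : R} {n : ℕ} (hu : u ∣ p ^ n)
    (h : ∀ d, d ∣ p → d ∣ u → d ∣ v → IsUnit d) : IsCoprime u v := by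
  refine IsRelPrime.isCoprime fun d hdu hdv ↦ ?_
  have hdp : IsCoprime d p :=
    IsRelPrime.isCoprime fun e hed hep ↦ h e hep (hed.trans hdu) (hed.trans hdv)
  exact hdp.pow_right.isUnit_of_dvd' dvd_rfl (hdu.trans hu)

theorem exists_primitive_multiple [IsDomain R] [UniqueFactorizationMonoid R] {K : Type*} [Field K]
    [Algebra R K] [IsFractionRing R K] {ι : Type*} [Finite ι] {v : ι → K} (hv : v ≠ 0) :
    ∃ (c : K) (g : ι → R), c ≠ 0 ∧ (∀ i, algebraMap R K (g i) = c * v i) ∧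
      ∀ d, (∀ i, d ∣ g i) → IsUnit d := by
  have := Fintype.ofFinite ι
  let := Classical.choice (inferInstance : Nonempty (NormalizedGCDMonoid R))
  obtain ⟨i₀, hi₀⟩ := Function.ne_iff.mp hv
  obtain ⟨b, hb⟩ := IsLocalization.exist_integer_multiples_of_finite (nonZeroDivisors R) v
  choose f hf using hb
  obtain ⟨g, hfg, hg⟩ := Finset.univ.extract_gcd f ⟨i₀, Finset.mem_univ _⟩
  have hb0 : algebraMap R K b ≠ 0 := IsFractionRing.to_map_ne_zero_of_mem_nonZeroDivisors b.2
  have key (i : ι) : algebraMap R K (Finset.univ.gcd f) * algebraMap R K (g i) =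
      algebraMap R K b * v i := by
    rw [← map_mul, ← hfg i (Finset.mem_univ _), hf, Algebra.smul_def]
  have hG : algebraMap R K (Finset.univ.gcd f) ≠ 0 := fun h ↦
    mul_ne_zero hb0 hi₀ (by rw [← key i₀, h, zero_mul])
  refine ⟨algebraMap R K b / algebraMap R K (Finset.univ.gcd f), g, div_ne_zero hb0 hG,
    fun i ↦ ?_, fun d hd ↦ isUnit_of_dvd_one (hg ▸ Finset.dvd_gcd fun i _ ↦ hd i)⟩
  rw [div_mul_eq_mul_div, eq_div_iff hG, ← key i, mul_comm]

theorem dvd_apply_of_dvd_sum {z : R} {q : Fin 3 → R} {i j : Fin 3} (hij : i ≠ j)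
    (hi : z ∣ q i) (hj : z ∣ q j) (hsum : z ∣ ∑ k, q k) (k : Fin 3) : z ∣ q k := by
  by_cases hki : k = i
  · exact hki ▸ hi
  by_cases hkj : k = j
  · exact hkj ▸ hj
  have huniv : ({i, j, k} : Finset (Fin 3)) = Finset.univ :=
    Finset.eq_univ_of_card _
      (Finset.card_eq_three.mpr ⟨i, j, k, hij, Ne.symm hki, Ne.symm hkj, rfl⟩)
  rw [← huniv, Finset.sum_insert (by simp [hij, Ne.symm hki]),
    Finset.sum_pair (Ne.symm hkj), dvd_add_right hi, dvd_add_right hj] at hsum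
  exact hsum

end Divisibility

theorem isAddCyclic_of_squarefree_card {G : Type*} [AddCommGroup G]
    (h : Squarefree (Nat.card G)) : IsAddCyclic G := by
  have : Finite G := Nat.finite_of_card_ne_zero h.ne_zero
  have : IsZGroup (Multiplicative G) := IsZGroup.of_squarefree h
  exact isCyclic_multiplicative_iff.mp inferInstance

section Pow

variable {F : Type*} [Field F] [IsAlgClosed F] {n : ℕ}

theorem exists_pow_eq_of_isUnit (hn : 0 < n) {u : F[X]} (hu : IsUnit u) : ∃ v, v ^ n = u := by
  obtain ⟨c, -, rfl⟩ := isUnit_iff.mp hu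
  obtain ⟨z, rfl⟩ := IsAlgClosed.exists_pow_nat_eq c hn
  exact ⟨C z, (C_pow ..).symm⟩

theorem exists_eq_pow_of_mul_eq_pow_of_isCoprime (hn : 0 < n) {a b c : F[X]}
    (hab : IsCoprime a b) (h : a * b = c ^ n) : ∃ d, a = d ^ n := by
  obtain ⟨d, u, rfl⟩ := exists_associated_pow_of_mul_eq_pow' hab h
  obtain ⟨v, hv⟩ := exists_pow_eq_of_isUnit hn u.isUnit
  exact ⟨d * v, by rw [mul_pow, hv]⟩

theorem exists_eq_pow_of_prod_eq_pow_of_isCoprime (hn : 0 < n) {ι : Type*} [Fintype ι] [Nonempty ι]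
    {q : ι → F[X]} {p : F[X]} (hq : Pairwise (IsCoprime on q)) (h : ∏ i, q i = p ^ n) :
    ∃ e : ι → F[X], Pairwise (IsCoprime on e) ∧ (∀ i, q i = e i ^ n) ∧ ∏ i, e i = p := by
  classical
  suffices ∃ e : ι → F[X], (∀ i, q i = e i ^ n) ∧ ∏ i, e i = p by
    obtain ⟨e, he, hprod⟩ := this
    refine ⟨e, fun i j hij ↦ (IsCoprime.pow_iff hn hn).mp ?_, he, hprod⟩
    exact he i ▸ he j ▸ hq hij
  have hpow (i : ι) : ∃ d, q i = d ^ n := by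
    refine exists_eq_pow_of_mul_eq_pow_of_isCoprime hn (IsCoprime.prod_right fun j hj ↦ ?_)
      ((Finset.mul_prod_erase _ q (Finset.mem_univ i)).trans h)
    exact hq (Finset.ne_of_mem_erase hj).symm
  choose e he using hpow
  have hprod : (∏ i, e i) ^ n = p ^ n := by
    rw [← h, ← Finset.prod_pow]
    exact Finset.prod_congr rfl fun i _ ↦ (he i).symm
  obtain ⟨u, hu⟩ := (Associated.pow_iff hn.ne').mp (Associated.of_eq hprod)
  rcases eq_or_ne (∏ i, e i) 0 with h0 | h0
  · exact ⟨e, he, by rw [← hu, h0, zero_mul]⟩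
  have hun : (u : F[X]) ^ n = 1 := by
    rw [← hu, mul_pow] at hprod
    exact (mul_eq_left₀ (pow_ne_zero n h0)).mp hprod.symm
  let i₀ := Classical.arbitrary ι
  refine ⟨Pi.mulSingle i₀ (u : F[X]) * e, fun i ↦ ?_, ?_⟩
  · rw [← Pi.pow_apply, mul_pow, ← Pi.mulSingle_pow, hun, Pi.mulSingle_one, one_mul, he,
      Pi.pow_apply]
  · simp only [Pi.mul_apply, Finset.prod_mul_distrib, Finset.prod_pi_mulSingle', Finset.mem_univ,
      if_true, ← hu, mul_comm]

end Pow

section Descent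

variable {F : Type*} [Field F]

/-- A pairwise coprime polynomial point of the cubic `q₀q₁q₂ = p³`, `q₀ + q₁ + q₂ = 3Xp`, which is
the Deuring normal form `y² + 3Xxy + y = x³` in the coordinates
`(q₀ : q₁ : q₂ : p) = (y : 1 : -(y + 3Xx + 1) : -x)`. -/
structure IsDeuringTriple (q : Fin 3 → F[X]) (p : F[X]) : Prop where
  pairwise_isCoprime : Pairwise (IsCoprime on q)
  prod_eq : ∏ j, q j = p ^ 3
  sum_eq : ∑ j, q j = 3 * X * p

/-- A pairwise coprime polynomial point of the Hesse cubic `a₀³ + a₁³ + a₂³ = 3X a₀a₁a₂`. -/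
structure IsHesseTriple (a : Fin 3 → F[X]) : Prop where
  pairwise_isCoprime : Pairwise (IsCoprime on a)
  sum_pow_eq : ∑ j, a j ^ 3 = 3 * X * ∏ j, a j

theorem IsDeuringTriple.exists_isHesseTriple [IsAlgClosed F] {q : Fin 3 → F[X]} {p : F[X]}
    (h : IsDeuringTriple q p) : ∃ a, IsHesseTriple a ∧ ∏ j, a j = p := by
  obtain ⟨a, hco, ha, hprod⟩ := exists_eq_pow_of_prod_eq_pow_of_isCoprime three_pos
    h.pairwise_isCoprime h.prod_eq
  refine ⟨a, ⟨hco, ?_⟩, hprod⟩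
  rw [hprod, ← h.sum_eq]
  exact Finset.sum_congr rfl fun j _ ↦ (ha j).symm

theorem isDeuringTriple_of_primitive {q : Fin 3 → F[X]} {p : F[X]} (hprod : ∏ j, q j = p ^ 3)
    (hsum : ∑ j, q j = 3 * X * p) (hprim : ∀ d, d ∣ p → (∀ j, d ∣ q j) → IsUnit d) :
    IsDeuringTriple q p := by
  refine ⟨fun i j hij ↦ ?_, hprod, hsum⟩
  refine isCoprime_of_dvd_pow_of_forall_isUnit
    (hprod ▸ Finset.dvd_prod_of_mem q (Finset.mem_univ i)) fun d hp hi hj ↦ hprim d hp ?_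
  exact dvd_apply_of_dvd_sum hij hi hj (hsum ▸ hp.mul_left _)

theorem IsDeuringTriple.map {L : Type*} [Field L] (f : F →+* L) {q : Fin 3 → F[X]} {p : F[X]}
    (h : IsDeuringTriple q p) : IsDeuringTriple (fun j ↦ (q j).map f) (p.map f) where
  pairwise_isCoprime _ _ hij := (h.pairwise_isCoprime hij).map (mapRingHom f)
  prod_eq := by rw [← Polynomial.map_prod, h.prod_eq, Polynomial.map_pow]
  sum_eq := by rw [← Polynomial.map_sum, h.sum_eq]; simp

/-- The cyclic permutation of the coordinates of a triple. On the Hesse cubic it is the translation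
by a point of order three. -/
def rotate {α : Type*} (a : Fin 3 → α) : Fin 3 → α := fun k ↦ a (k + 1)

theorem prod_rotate {M : Type*} [CommMonoid M] (a : Fin 3 → M) : ∏ j, rotate a j = ∏ j, a j :=
  Equiv.prod_comp (Equiv.addRight 1) a

theorem IsHesseTriple.rotate {a : Fin 3 → F[X]} (h : IsHesseTriple a) :
    IsHesseTriple (rotate a) where
  pairwise_isCoprime := h.pairwise_isCoprime.comp_of_injective (add_left_injective 1)
  sum_pow_eq := by
    rw [prod_rotate, ← h.sum_pow_eq]
    exact Equiv.sum_comp (Equiv.addRight 1) fun j ↦ a j ^ 3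

/-- For `ζ³ = 1`, the linear form cutting out the tangent line of the Hesse cubic at the flex
`(0 : -ζ : 1)`, evaluated at `a`. -/
noncomputable def flexTangent (ζ : F) (a : Fin 3 → F[X]) : F[X] :=
  X * a 0 + C ζ * a 1 + C (ζ ^ 2) * a 2

section PrimitiveRoot

variable {w : F}

theorem one_add_C_add_C_sq (hw : IsPrimitiveRoot w 3) : 1 + C w + C w ^ 2 = 0 := by
  simpa [Finset.sum_range_succ] using
    (hw.map_of_injective (C_injective (R := F))).geom_sum_eq_zero (by simp)

theorem prod_X_sub_C_pow (hw : IsPrimitiveRoot w 3) :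
    ∏ r : Fin 3, (X - C (w ^ (r : ℕ))) = X ^ 3 - 1 := by
  have h := one_add_C_add_C_sq hw
  simp only [Fin.prod_univ_three, Fin.val_zero, Fin.val_one, Fin.val_two, map_pow, pow_zero,
    pow_one]
  grind

theorem prod_flexTangent (hw : IsPrimitiveRoot w 3) (a : Fin 3 → F[X]) :
    ∏ j : Fin 3, flexTangent (w ^ (j : ℕ)) a =
      X ^ 3 * a 0 ^ 3 + a 1 ^ 3 + a 2 ^ 3 - 3 * X * ∏ j, a j := by
  have h := one_add_C_add_C_sq hw
  simp only [flexTangent, Fin.prod_univ_three, Fin.val_zero, Fin.val_one, Fin.val_two, map_pow,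
    pow_zero, pow_one]
  grind

theorem sum_flexTangent (hw : IsPrimitiveRoot w 3) (a : Fin 3 → F[X]) :
    ∑ j : Fin 3, flexTangent (w ^ (j : ℕ)) a = 3 * X * a 0 := by
  have h := one_add_C_add_C_sq hw
  simp only [flexTangent, Fin.sum_univ_three, Fin.val_zero, Fin.val_one, Fin.val_two, map_pow,
    pow_zero, pow_one]
  grind

theorem IsHesseTriple.prod_flexTangent (hw : IsPrimitiveRoot w 3) {a : Fin 3 → F[X]}
    (h : IsHesseTriple a) :
    ∏ j : Fin 3, flexTangent (w ^ (j : ℕ)) a = (X ^ 3 - 1) * a 0 ^ 3 := by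
  have := h.sum_pow_eq
  rw [Fin.sum_univ_three] at this
  rw [_root_.prod_flexTangent hw]
  linear_combination this

theorem isUnit_three [NeZero (3 : F)] : IsUnit (3 : F[X]) :=
  (IsUnit.mk0 (3 : F) (NeZero.ne 3)).map C

theorem dvd_of_forall_dvd_flexTangent [NeZero (3 : F)] (hw : IsPrimitiveRoot w 3)
    {a : Fin 3 → F[X]} {d : F[X]} (h : ∀ j : Fin 3, d ∣ flexTangent (w ^ (j : ℕ)) a) :
    d ∣ a 1 ∧ d ∣ a 2 := by
  have hω := one_add_C_add_C_sq hw
  have hcomb (u v : F[X]) : d ∣ flexTangent (w ^ 0) a + u * flexTangent (w ^ 1) a +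
      v * flexTangent (w ^ 2) a :=
    dvd_add (dvd_add (h 0) ((h 1).mul_left u)) ((h 2).mul_left v)
  have h₁ : 3 * a 1 = flexTangent (w ^ 0) a + C w ^ 2 * flexTangent (w ^ 1) a +
      C w * flexTangent (w ^ 2) a := by
    simp only [flexTangent, map_pow]
    grind
  have h₂ : 3 * a 2 = flexTangent (w ^ 0) a + C w * flexTangent (w ^ 1) a +
      C w ^ 2 * flexTangent (w ^ 2) a := by
    simp only [flexTangent, map_pow]
    grind
  exact ⟨isUnit_three.dvd_mul_left.mp (h₁ ▸ hcomb _ _),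
    isUnit_three.dvd_mul_left.mp (h₂ ▸ hcomb _ _)⟩

theorem isCoprime_of_dvd_flexTangent [NeZero (3 : F)] (hw : IsPrimitiveRoot w 3)
    {a : Fin 3 → F[X]} (ha : IsCoprime (a 1) (a 2)) {i j : Fin 3} (hij : i ≠ j) {u v : F[X]}
    (hu : u ∣ flexTangent (w ^ (i : ℕ)) a) (hv : v ∣ flexTangent (w ^ (j : ℕ)) a)
    (hu₀ : u ∣ a 0 ^ 3) : IsCoprime u v := by
  refine isCoprime_of_dvd_pow_of_forall_isUnit hu₀ fun d hd₀ hdu hdv ↦ ?_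
  have hsum : d ∣ ∑ k : Fin 3, flexTangent (w ^ (k : ℕ)) a :=
    sum_flexTangent hw a ▸ hd₀.mul_left _
  obtain ⟨h₁, h₂⟩ := dvd_of_forall_dvd_flexTangent hw
    (dvd_apply_of_dvd_sum hij (hdu.trans hu) (hdv.trans hv) hsum)
  exact ha.isUnit_of_dvd' h₁ h₂

theorem isDeuringTriple_flexTangent [NeZero (3 : F)] (hw : IsPrimitiveRoot w 3)
    {e : Fin 3 → F[X]} (he : IsCoprime (e 1) (e 2))
    (h : (X ^ 3 - 1) * e 0 ^ 3 + e 1 ^ 3 + e 2 ^ 3 = 3 * X * ∏ j, e j) :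
    IsDeuringTriple (fun j : Fin 3 ↦ flexTangent (w ^ (j : ℕ)) e) (e 0) := by
  have hprod : ∏ j : Fin 3, flexTangent (w ^ (j : ℕ)) e = e 0 ^ 3 := by
    rw [prod_flexTangent hw]
    linear_combination h
  refine ⟨fun i j hij ↦ ?_, hprod, sum_flexTangent hw e⟩
  refine isCoprime_of_dvd_flexTangent hw he hij dvd_rfl dvd_rfl ?_
  exact hprod ▸ Finset.dvd_prod_of_mem (fun j : Fin 3 ↦ flexTangent (w ^ (j : ℕ)) e)
    (Finset.mem_univ i)

/-- The fibre of the Hesse pencil over each cusp `X = wʳ` is a triangle of lines. The index `i`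
records, for each `r`, a line `flexTangent (w ^ i r)` containing the specialization of `a`. -/
def IsCuspIndex (w : F) (a : Fin 3 → F[X]) (i : Fin 3 → Fin 3) : Prop :=
  ∀ r : Fin 3, X - C (w ^ (r : ℕ)) ∣ flexTangent (w ^ (i r : ℕ)) a

theorem IsHesseTriple.exists_isCuspIndex (hw : IsPrimitiveRoot w 3) {a : Fin 3 → F[X]}
    (h : IsHesseTriple a) : ∃ i, IsCuspIndex w a i := by
  suffices hex : ∀ r : Fin 3, ∃ j : Fin 3, X - C (w ^ (r : ℕ)) ∣ flexTangent (w ^ (j : ℕ)) a by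
    choose i hi using hex
    exact ⟨i, hi⟩
  intro r
  have hdvd : X - C (w ^ (r : ℕ)) ∣ ∏ j : Fin 3, flexTangent (w ^ (j : ℕ)) a := by
    rw [h.prod_flexTangent hw, ← prod_X_sub_C_pow hw]
    exact (Finset.dvd_prod_of_mem (fun r : Fin 3 ↦ X - C (w ^ (r : ℕ)))
      (Finset.mem_univ r)).mul_right _
  obtain ⟨j, -, hj⟩ := (prime_X_sub_C _).exists_mem_finset_dvd hdvd
  exact ⟨j, hj⟩

theorem X_sub_C_dvd_flexTangent_rotate {ζ η : F} (hζ : ζ ^ 3 = 1) {a : Fin 3 → F[X]}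
    (h : X - C η ∣ flexTangent ζ a) : X - C η ∣ flexTangent (ζ * η) (rotate a) := by
  have hCζ : C ζ ^ 3 = 1 := by rw [← C_pow, hζ, C_1]
  have heq : flexTangent (ζ * η) (rotate a) =
      (X - C η) * (a 1 - C (ζ ^ 2 * η) * a 0) + C (ζ ^ 2 * η) * flexTangent ζ a := by
    simp only [flexTangent, rotate, zero_add, Fin.reduceAdd, map_mul, map_pow]
    linear_combination (-C η * a 1 - C ζ * C η * a 2) * hCζ
  rw [heq]
  exact dvd_add (dvd_mul_right _ _) (h.mul_left _)

theorem IsCuspIndex.rotate (hw : IsPrimitiveRoot w 3) {a : Fin 3 → F[X]} {i : Fin 3 → Fin 3}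
    (h : IsCuspIndex w a i) : IsCuspIndex w (rotate a) (fun r ↦ i r + r) := fun r ↦ by
  have hpow : w ^ ((i r + r : Fin 3) : ℕ) = w ^ (i r : ℕ) * w ^ (r : ℕ) := by
    rw [Fin.val_add, ← pow_eq_pow_mod _ hw.pow_eq_one, pow_add]
  rw [hpow]
  refine X_sub_C_dvd_flexTangent_rotate ?_ (h r)
  rw [pow_right_comm, hw.pow_eq_one, one_pow]

/-- The part of `X³ - 1 = ∏ᵣ (X - wʳ)` attached by the index `i` to the `j`-th flex tangent. -/
noncomputable def cuspProd (w : F) (i : Fin 3 → Fin 3) (j : Fin 3) : F[X] :=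
  ∏ r with i r = j, (X - C (w ^ (r : ℕ)))

theorem prod_cuspProd (hw : IsPrimitiveRoot w 3) (i : Fin 3 → Fin 3) :
    ∏ j, cuspProd w i j = X ^ 3 - 1 :=
  (Finset.prod_fiberwise _ i _).trans (prod_X_sub_C_pow hw)

theorem monic_cuspProd (w : F) (i : Fin 3 → Fin 3) (j : Fin 3) : (cuspProd w i j).Monic :=
  monic_prod_of_monic _ _ fun _ _ ↦ monic_X_sub_C _

theorem natDegree_cuspProd (w : F) (i : Fin 3 → Fin 3) (j : Fin 3) :
    (cuspProd w i j).natDegree = Finset.card {r | i r = j} := by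
  rw [cuspProd, natDegree_prod_of_monic _ _ fun _ _ ↦ monic_X_sub_C _]
  simp only [natDegree_X_sub_C, Finset.sum_const, smul_eq_mul, mul_one]

theorem cuspProd_const (hw : IsPrimitiveRoot w 3) (j k : Fin 3) :
    cuspProd w (fun _ ↦ j) k = if j = k then X ^ 3 - 1 else 1 := by
  rw [cuspProd, Finset.filter_const]
  split_ifs
  · exact prod_X_sub_C_pow hw
  · exact Finset.prod_empty

theorem IsCuspIndex.cuspProd_dvd (hw : IsPrimitiveRoot w 3) {a : Fin 3 → F[X]}
    {i : Fin 3 → Fin 3} (h : IsCuspIndex w a i) (j : Fin 3) :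
    cuspProd w i j ∣ flexTangent (w ^ (j : ℕ)) a := by
  refine Finset.prod_dvd_of_coprime (fun r _ s _ hrs ↦ ?_) fun r hr ↦ ?_
  · refine isCoprime_X_sub_C_of_isUnit_sub (IsUnit.mk0 _ (sub_ne_zero.mpr fun heq ↦ hrs ?_))
    exact Fin.ext (hw.pow_inj r.isLt s.isLt heq)
  · rw [← (Finset.mem_filter.mp hr).2]
    exact h r

theorem IsHesseTriple.exists_flexTangent_eq_mul_pow [IsAlgClosed F] [NeZero (3 : F)]
    (hw : IsPrimitiveRoot w 3) {a : Fin 3 → F[X]} (h : IsHesseTriple a) {i : Fin 3 → Fin 3}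
    (hi : IsCuspIndex w a i) :
    ∃ e : Fin 3 → F[X], Pairwise (IsCoprime on e) ∧ ∏ j, e j = a 0 ∧
      ∀ j : Fin 3, flexTangent (w ^ (j : ℕ)) a = cuspProd w i j * e j ^ 3 := by
  choose q hq using hi.cuspProd_dvd hw
  have hne : (X ^ 3 - 1 : F[X]) ≠ 0 := X_pow_sub_C_ne_zero three_pos 1
  have hprod : ∏ j, q j = a 0 ^ 3 := by
    apply mul_left_cancel₀ hne
    rw [← h.prod_flexTangent hw, Finset.prod_congr rfl fun j _ ↦ hq j, Finset.prod_mul_distrib,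
      prod_cuspProd hw]
  have hco : Pairwise (IsCoprime on q) := fun j k hjk ↦
    isCoprime_of_dvd_flexTangent hw (h.pairwise_isCoprime (by decide)) hjk
      (hq j ▸ dvd_mul_left _ _) (hq k ▸ dvd_mul_left _ _)
      (hprod ▸ Finset.dvd_prod_of_mem q (Finset.mem_univ j))
  obtain ⟨e, heco, he, hea⟩ := exists_eq_pow_of_prod_eq_pow_of_isCoprime three_pos hco hprod
  exact ⟨e, heco, hea, fun j ↦ he j ▸ hq j⟩

theorem IsHesseTriple.exists_natDegree_flexTangent_eq [NeZero (3 : F)] (hw : IsPrimitiveRoot w 3)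
    {a : Fin 3 → F[X]} (h : IsHesseTriple a) (ha : a 0 ≠ 0) :
    ∃ j k : Fin 3, j ≠ k ∧
      (flexTangent (w ^ (j : ℕ)) a).natDegree = (flexTangent (w ^ (k : ℕ)) a).natDegree := by
  -- Distinct degrees cannot cancel in the sum `3X a₀`, so none would exceed the mean `deg a₀ + 1`.
  by_contra! hne
  have hX : (X ^ 3 - 1 : F[X]) ≠ 0 := X_pow_sub_C_ne_zero three_pos 1
  have hX_deg : (X ^ 3 - 1 : F[X]).natDegree = 3 := natDegree_X_pow_sub_C
  have hprod := h.prod_flexTangent hw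
  have hT : ∀ j ∈ Finset.univ, flexTangent (w ^ ((j : Fin 3) : ℕ)) a ≠ 0 := by
    rw [← Finset.prod_ne_zero_iff, hprod]
    exact mul_ne_zero hX (pow_ne_zero 3 ha)
  have htotal := congrArg natDegree hprod
  rw [natDegree_prod _ _ hT, natDegree_mul hX (pow_ne_zero 3 ha), natDegree_pow, hX_deg,
    Fin.sum_univ_three] at htotal
  have hle (j : Fin 3) : (flexTangent (w ^ (j : ℕ)) a).natDegree ≤ (a 0).natDegree + 1 := by
    have hsum := congrArg natDegree (sum_flexTangent hw a)
    rw [natDegree_sum_eq_of_disjoint _ _ fun j _ k _ hjk ↦ hne j k hjk,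
      natDegree_mul (mul_ne_zero isUnit_three.ne_zero X_ne_zero) ha,
      natDegree_mul isUnit_three.ne_zero X_ne_zero, natDegree_ofNat, natDegree_X] at hsum
    have hsup := Finset.le_sup (f := fun k : Fin 3 ↦ (flexTangent (w ^ (k : ℕ)) a).natDegree)
      (Finset.mem_univ j)
    lia
  have := hle 0
  have := hle 1
  have := hle 2
  exact hne 0 1 (by decide) (by lia)

theorem exists_rotation_const_of_card_modEq : ∀ {i : Fin 3 → Fin 3} {j k : Fin 3}, j ≠ k →
    Finset.card {r | i r = j} ≡ Finset.card {r | i r = k} [MOD 3] →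
    (∃ c, i = fun _ ↦ c) ∨ (∃ c, (fun r ↦ i r + r) = fun _ ↦ c) ∨
      ∃ c, (fun r ↦ i r + r + r) = fun _ ↦ c := by
  decide

theorem IsHesseTriple.exists_isCuspIndex_const [IsAlgClosed F] [NeZero (3 : F)]
    (hw : IsPrimitiveRoot w 3) {a : Fin 3 → F[X]} (h : IsHesseTriple a) (ha : a 0 ≠ 0) :
    ∃ b, IsHesseTriple b ∧ ∏ j, b j = ∏ j, a j ∧ ∃ c, IsCuspIndex w b fun _ ↦ c := by
  obtain ⟨i, hi⟩ := h.exists_isCuspIndex hw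
  obtain ⟨e, -, hea, he⟩ := h.exists_flexTangent_eq_mul_pow hw hi
  obtain ⟨j, k, hjk, hdeg⟩ := h.exists_natDegree_flexTangent_eq hw ha
  have he0 : ∀ j ∈ Finset.univ, e j ≠ 0 := Finset.prod_ne_zero_iff.mp (hea ▸ ha)
  have hdeg_eq (j : Fin 3) : (flexTangent (w ^ (j : ℕ)) a).natDegree =
      Finset.card {r | i r = j} + 3 * (e j).natDegree := by
    rw [he, (monic_cuspProd w i j).natDegree_mul' (pow_ne_zero 3 (he0 j (Finset.mem_univ j))),
      natDegree_pow, natDegree_cuspProd]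
  have hmod : Finset.card {r | i r = j} ≡ Finset.card {r | i r = k} [MOD 3] := by
    rw [hdeg_eq, hdeg_eq] at hdeg
    rw [Nat.ModEq]
    lia
  rcases exists_rotation_const_of_card_modEq hjk hmod with ⟨c, hc⟩ | ⟨c, hc⟩ | ⟨c, hc⟩
  · exact ⟨a, h, rfl, c, hc ▸ hi⟩
  · exact ⟨_, h.rotate, prod_rotate a, c, hc ▸ hi.rotate hw⟩
  · exact ⟨_, h.rotate.rotate, (prod_rotate _).trans (prod_rotate a), c,
      hc ▸ (hi.rotate hw).rotate hw⟩

theorem IsHesseTriple.exists_isDeuringTriple [IsAlgClosed F] [NeZero (3 : F)]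
    (hw : IsPrimitiveRoot w 3) {a : Fin 3 → F[X]} (h : IsHesseTriple a) {c : Fin 3}
    (hc : IsCuspIndex w a fun _ ↦ c) : ∃ q p, IsDeuringTriple q p ∧ p ∣ a 0 := by
  obtain ⟨e, hco, hea, he⟩ := h.exists_flexTangent_eq_mul_pow hw hc
  let shift : Fin 3 ≃ Fin 3 := Equiv.addLeft c
  have hprod : ∏ k, e (shift k) = a 0 := (Equiv.prod_comp shift e).trans hea
  have hsum : (X ^ 3 - 1) * e (shift 0) ^ 3 + e (shift 1) ^ 3 + e (shift 2) ^ 3 =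
      3 * X * ∏ k, e (shift k) := by
    rw [hprod, ← sum_flexTangent hw a, ← Equiv.sum_comp shift]
    simp [he, cuspProd_const hw, Fin.sum_univ_three, shift]
  have hco₁₂ : IsCoprime (e (shift 1)) (e (shift 2)) := hco (shift.injective.ne (by decide))
  refine ⟨_, _, isDeuringTriple_flexTangent (e := fun k ↦ e (shift k)) hw hco₁₂ hsum, ?_⟩
  exact hea ▸ Finset.dvd_prod_of_mem e (Finset.mem_univ _)

end PrimitiveRoot

theorem IsHesseTriple.natDegree_apply_zero_lt [NeZero (3 : F)] {a : Fin 3 → F[X]}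
    (h : IsHesseTriple a) (ha : ∏ j, a j ≠ 0) : (a 0).natDegree < (∏ j, a j).natDegree := by
  have hne : ∀ j ∈ Finset.univ, a j ≠ 0 := Finset.prod_ne_zero_iff.mp ha
  have hdeg := natDegree_prod _ _ hne
  rw [Fin.sum_univ_three] at hdeg
  by_contra hle
  obtain ⟨b, hb⟩ := natDegree_eq_zero.mp (show (a 1).natDegree = 0 by lia)
  obtain ⟨c, hc⟩ := natDegree_eq_zero.mp (show (a 2).natDegree = 0 by lia)
  have heq := congrArg natDegree h.sum_pow_eq
  rw [natDegree_mul (mul_ne_zero isUnit_three.ne_zero X_ne_zero) ha,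
    natDegree_mul isUnit_three.ne_zero X_ne_zero, natDegree_ofNat, natDegree_X, Fin.sum_univ_three,
    ← hb, ← hc, ← C_pow, ← C_pow, natDegree_add_C, natDegree_add_C, natDegree_pow] at heq
  lia

theorem IsDeuringTriple.exists_natDegree_lt [IsAlgClosed F] [NeZero (3 : F)] {q : Fin 3 → F[X]}
    {p : F[X]} (h : IsDeuringTriple q p) (hp : p ≠ 0) :
    ∃ (q' : Fin 3 → F[X]) (p' : F[X]), IsDeuringTriple q' p' ∧ p' ≠ 0 ∧
      p'.natDegree < p.natDegree := by
  have : NeZero ((3 : ℕ) : F) := ‹NeZero (3 : F)›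
  obtain ⟨w, hw⟩ := HasEnoughRootsOfUnity.exists_primitiveRoot F 3
  obtain ⟨a, ha, rfl⟩ := h.exists_isHesseTriple
  have ha₀ : a 0 ≠ 0 := Finset.prod_ne_zero_iff.mp hp 0 (Finset.mem_univ 0)
  obtain ⟨b, hb, hba, c, hc⟩ := ha.exists_isCuspIndex_const hw ha₀
  rw [← hba] at hp ⊢
  have hb₀ : b 0 ≠ 0 := Finset.prod_ne_zero_iff.mp hp 0 (Finset.mem_univ 0)
  obtain ⟨q', p', h', hdvd⟩ := hb.exists_isDeuringTriple hw hc
  exact ⟨q', p', h', ne_zero_of_dvd_ne_zero hb₀ hdvd,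
    (natDegree_le_of_dvd hdvd hb₀).trans_lt (hb.natDegree_apply_zero_lt hp)⟩

theorem IsDeuringTriple.eq_zero_of_isAlgClosed [IsAlgClosed F] [NeZero (3 : F)]
    {q : Fin 3 → F[X]} {p : F[X]} (h : IsDeuringTriple q p) : p = 0 := by
  induction hn : p.natDegree using Nat.strong_induction_on generalizing q p with
  | _ n ih =>
    by_contra hp
    obtain ⟨q', p', h', hp', hlt⟩ := h.exists_natDegree_lt hp
    exact hp' (ih _ (hn ▸ hlt) h' rfl)

theorem IsDeuringTriple.eq_zero [NeZero (3 : F)] {q : Fin 3 → F[X]} {p : F[X]}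
    (h : IsDeuringTriple q p) : p = 0 := by
  let f := algebraMap F (AlgebraicClosure F)
  have : NeZero (3 : AlgebraicClosure F) :=
    ⟨by rw [← map_ofNat f 3]; exact (_root_.map_ne_zero f).mpr (NeZero.ne 3)⟩
  exact (Polynomial.map_eq_zero f).mp (h.map f).eq_zero_of_isAlgClosed

end Descent

section Curve

/-- The Weierstrass curve `y² + αxy + y = x³` in Deuring normal form. -/
def deuringCurve {R : Type*} [CommRing R] (α : R) : WeierstrassCurve.Affine R :=
  { a₁ := α, a₂ := 0, a₃ := 1, a₄ := 0, a₆ := 0 }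

theorem deuringCurve_equation_iff {R : Type*} [CommRing R] {α x y : R} :
    (deuringCurve α).Equation x y ↔ y ^ 2 + α * x * y + y = x ^ 3 := by
  simp [WeierstrassCurve.Affine.equation_iff, deuringCurve]

theorem deuringCurve_Δ {R : Type*} [CommRing R] (α : R) : (deuringCurve α).Δ = α ^ 3 - 27 := by
  simp only [WeierstrassCurve.Δ, WeierstrassCurve.b₂, WeierstrassCurve.b₄, WeierstrassCurve.b₆,
    WeierstrassCurve.b₈, deuringCurve]
  ring

theorem eq_zero_of_deuringCurve_equation {F : Type*} [Field F] [NeZero (3 : F)] {x y : RatFunc F}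
    (h : (deuringCurve (3 * RatFunc.X)).Equation x y) : x = 0 := by
  rw [deuringCurve_equation_iff] at h
  obtain ⟨c, g, hc, hg, hprim⟩ := exists_primitive_multiple (R := F[X]) (v := ![x, y, 1])
    (fun hv ↦ one_ne_zero (congrFun hv 2))
  have hx : algebraMap F[X] (RatFunc F) (g 0) = c * x := hg 0
  have hy : algebraMap F[X] (RatFunc F) (g 1) = c * y := hg 1
  have h1 : algebraMap F[X] (RatFunc F) (g 2) = c * 1 := hg 2
  have htriple : IsDeuringTriple ![g 1, g 2, -(g 1 + 3 * X * g 0 + g 2)] (-g 0) := by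
    refine isDeuringTriple_of_primitive ?_ ?_ fun d hd₀ hd ↦ hprim d fun i ↦ ?_
    · apply RatFunc.algebraMap_injective F
      simp only [Fin.prod_univ_three, Matrix.cons_val, map_mul, map_neg, map_add, map_pow,
        map_ofNat, RatFunc.algebraMap_X, hx, hy, h1]
      linear_combination -c ^ 3 * h
    · simp only [Fin.sum_univ_three, Matrix.cons_val]
      ring
    · fin_cases i
      exacts [dvd_neg.mp hd₀, hd 0, hd 1]
  rw [neg_eq_zero.mp htriple.eq_zero, map_zero] at hx
  exact (mul_eq_zero.mp hx.symm).resolve_left hc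

variable {L : Type*} [Field L] {s x y : L}

/-- In characteristic two, the affine points of the subgroup of order six of `deuringCurve (s ^ 2)`
generated by `(s, 1)`. -/
def affineTorsion (s : L) : Set (L × L) :=
  {(0, 0), (0, 1), (s, 1), (s, s ^ 3), ((s ^ 2)⁻¹, (s ^ 3)⁻¹)}

theorem ncard_affineTorsion (hs : s ≠ 0) (hs3 : s ^ 3 ≠ 1) : (affineTorsion s).ncard = 5 := by
  have hs2 : (s ^ 2)⁻¹ ≠ 0 := inv_ne_zero (pow_ne_zero 2 hs)
  have hinv : (s ^ 2)⁻¹ ≠ s := fun h ↦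
    hs3 (by rw [pow_succ, mul_eq_one_iff_inv_eq₀ (pow_ne_zero 2 hs), h])
  simp [affineTorsion, Set.ncard_insert_of_notMem, hs.symm, hs2.symm, hs3.symm, hinv.symm]

variable [CharP L 2]

/-- This map is the Verschiebung, dual to the Frobenius `(x, y) ↦ (x², y²)` from `deuringCurve s` to
`deuringCurve (s ^ 2)`: its first coordinate at `x²` is the duplication formula. -/
theorem deuringCurve_equation_verschiebung (hx : s ^ 2 * x + 1 ≠ 0)
    (h : (deuringCurve (s ^ 2)).Equation x y) :
    (deuringCurve s).Equation ((x ^ 2 + s * x) / (s ^ 2 * x + 1))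
      (((1 + s ^ 3) * x ^ 3 + (s * x ^ 2 + 1) * y) / (s ^ 2 * x + 1) ^ 2) := by
  have h2 : (2 : L) = 0 := CharTwo.two_eq_zero
  rw [deuringCurve_equation_iff] at h ⊢
  field_simp
  grind

theorem eq_inv_of_deuringCurve_equation (hx : s ^ 2 * x + 1 = 0)
    (h : (deuringCurve (s ^ 2)).Equation x y) : x = (s ^ 2)⁻¹ ∧ y = (s ^ 3)⁻¹ := by
  rw [deuringCurve_equation_iff] at h
  have hs : s ≠ 0 := by rintro rfl; simp at hx
  have hx' : x = (s ^ 2)⁻¹ := by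
    rw [← mul_eq_one_iff_eq_inv₀ (pow_ne_zero 2 hs), mul_comm]
    exact CharTwo.add_eq_zero.mp hx
  refine ⟨hx', CharTwo.sq_injective ?_⟩
  calc y ^ 2 = x ^ 3 := by linear_combination h - y * hx
    _ = (s ^ 3)⁻¹ ^ 2 := by rw [hx']; ring

theorem deuringCurve_equation_iff_mem (hs : s ≠ 0)
    (htriv : ∀ {x y : L}, (deuringCurve s).Equation x y → x = 0) :
    (deuringCurve (s ^ 2)).Equation x y ↔ (x, y) ∈ affineTorsion s := by
  have h2 : (2 : L) = 0 := CharTwo.two_eq_zero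
  simp only [affineTorsion, Set.mem_insert_iff, Set.mem_singleton_iff, Prod.mk.injEq]
  constructor
  · intro h
    by_cases hx : s ^ 2 * x + 1 = 0
    · simp [eq_inv_of_deuringCurve_equation hx h]
    have hx' : x * (x + s) = 0 := by
      have hdiv := htriv (deuringCurve_equation_verschiebung hx h)
      linear_combination (div_eq_zero_iff.mp hdiv).resolve_right hx
    rw [deuringCurve_equation_iff] at h
    rcases mul_eq_zero.mp hx' with rfl | hx'
    · have : y * (y + 1) = 0 := by linear_combination h
      grind
    · obtain rfl := CharTwo.add_eq_zero.mp hx'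
      have : (y + 1) * (y + x ^ 3) = 0 := by linear_combination h + x ^ 3 * h2
      grind
  · rw [deuringCurve_equation_iff]
    rintro (⟨rfl, rfl⟩ | ⟨rfl, rfl⟩ | ⟨rfl, rfl⟩ | ⟨rfl, rfl⟩ | ⟨rfl, rfl⟩) <;> grind

theorem card_deuringCurve_point (hs : s ≠ 0) (hs3 : s ^ 3 ≠ 1)
    (htriv : ∀ {x y : L}, (deuringCurve s).Equation x y → x = 0) :
    Nat.card (deuringCurve (s ^ 2)).Point = 6 := by
  have hΔ : (deuringCurve (s ^ 2)).Δ = (s ^ 3 - 1) ^ 2 := by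
    rw [deuringCurve_Δ]
    linear_combination (s ^ 3 - 14) * CharTwo.two_eq_zero (R := L)
  have hΔ0 : (deuringCurve (s ^ 2)).Δ ≠ 0 := hΔ ▸ pow_ne_zero 2 (sub_ne_zero.mpr hs3)
  have hmem (xy : L × L) :
      (deuringCurve (s ^ 2)).Nonsingular xy.1 xy.2 ↔ xy ∈ affineTorsion s := by
    rw [← WeierstrassCurve.Affine.equation_iff_nonsingular_of_Δ_ne_zero hΔ0,
      deuringCurve_equation_iff_mem hs htriv]
  have hcard : Nat.card {xy : L × L // (deuringCurve (s ^ 2)).Nonsingular xy.1 xy.2} = 5 :=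
    (Nat.card_congr (Equiv.subtypeEquivRight hmem)).trans (ncard_affineTorsion hs hs3)
  have := Nat.finite_of_card_ne_zero (hcard.trans_ne (by decide))
  rw [Nat.card_congr (deuringCurve (s ^ 2)).nonsingularPointEquiv]
  exact Finite.card_option.trans (congrArg (· + 1) hcard)

end Curve

theorem card_deuringCurve_X_sq_point (F : Type*) [Field F] [CharP F 2] :
    Nat.card (deuringCurve (RatFunc.X ^ 2 : RatFunc F)).Point = 6 := by
  have h3 : (3 : F) = 1 := by linear_combination CharTwo.two_eq_zero (R := F)
  have : NeZero (3 : F) := ⟨h3.trans_ne one_ne_zero⟩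
  have hX : (RatFunc.X : RatFunc F) ^ 3 ≠ 1 := fun h ↦
    X_pow_sub_C_ne_zero three_pos (1 : F) (RatFunc.algebraMap_injective F (by simp [h]))
  have h3X : 3 * RatFunc.X = (RatFunc.X : RatFunc F) := by
    linear_combination RatFunc.X * CharTwo.two_eq_zero (R := RatFunc F)
  exact card_deuringCurve_point RatFunc.X_ne_zero hX
    fun h ↦ eq_zero_of_deuringCurve_equation (h3X ▸ h)

open scoped Classical in
theorem points_iso_zmod_six_general (F : Type*) [Field F] [CharP F 2] :
    Nonempty ((deuringCurve (RatFunc.X ^ 2 : RatFunc F)).Point ≃+ ZMod 6) := by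
  have hcard := card_deuringCurve_X_sq_point F
  have hcyclic : IsAddCyclic (deuringCurve (RatFunc.X ^ 2 : RatFunc F)).Point :=
    isAddCyclic_of_squarefree_card (by rw [hcard]; decide +kernel)
  exact ⟨(hcard ▸ zmodAddCyclicAddEquiv hcyclic).symm⟩

open scoped Classical in
/-- The group of points of `W : y² + t²xy + y = x³` over `K = k(t)` is isomorphic to `ℤ/6ℤ`. -/
theorem points_iso_zmod_six : Nonempty (W.Point ≃+ (ZMod 6)) :=
  points_iso_zmod_six_general k
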